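/- Let v be quasi-definite with SMOP (P_n), recurrence coefficients (a_n, b_n), and associated first-kind polynomials (P^{(1)}_n); let v̂ with (x−c)v̂ = v be a Geronimus transformation with v̂_0 ≠ 0, and set S_n(x) = P_n(x) + (v_0/v̂_0)·P^{(1)}_{n−1}(x). Then (S_n)_{n≥0} is the co-recursive sequence of parameter α = −v_0/v̂_0 with respect to v: S_0 = 1, S_1(x) = P_1(x) − α, and x·S_n = S_{n+1} + b_n·S_n + a_n·S_{n−1} for all n ≥ 1. Moreover, if v^α is a linear functional whose SMOP is (S_n), then v^α = (v^α_0/v_0)·(v^{-1} − (1/v̂_0)·δ′_0)^{-1}; equivalently, for all n ≥ 0, Σ_{k=0}^n v^α_k·w_{n−k} = (v^α_0/v_0)·δ_{n,0}, where w_n = (v^{-1})_n + (1/v̂_0)·δ_{n,1}. -/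

import Mathlib

/-!
Let `D p (x) = ⟨v_y, (p(x) - p(y)) / (x - y)⟩`. Applied to the three term recurrence of `P`, the
operator `D` yields `D P_{n+1} = v_0 P^{(1)}_n`. As `(x^n - y^n) / (x - y) = Σ_{i+j=n-1} x^i y^j`,
a second functional `u` satisfies `⟨u, D p⟩ = ⟨X u v, p⟩`, where functionals are multiplied as
their moment generating series. Hence `⟨u, P_n + v_0 t P^{(1)}_{n-1}⟩ = ⟨u (1 + t X v), P_n⟩`; if
this vanishes for all `n ≥ 1`, then `v_0 u (1 + t X v) = u_0 v`. Multiplying by `v⁻¹` gives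
`v_0 u (v⁻¹ + t X) = u_0`; here `X` represents `-δ'_0`, and `u = v^α` and `t = 1 / v̂_0`.
-/

open Polynomial

noncomputable section

/-- Apply a linear functional (identified with its moment sequence) to a polynomial:
`⟨u, p⟩ = Σ_k c_k u_k` for `p = Σ_k c_k x^k`. -/
def fapply (u : ℕ → ℂ) (p : Polynomial ℂ) : ℂ := p.sum fun k ck => ck * u k

/-- `P` is the sequence of monic orthogonal polynomials (SMOP) of the functional `u`. -/
def IsSMOP (u : ℕ → ℂ) (P : ℕ → Polynomial ℂ) : Prop :=
  (∀ n, (P n).Monic) ∧ (∀ n, (P n).natDegree = n) ∧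
    (∀ n m, n ≠ m → fapply u (P n * P m) = 0) ∧ (∀ n, fapply u (P n * P n) ≠ 0)

/-- A functional is quasi-definite iff it admits a SMOP. -/
def IsQuasiDefinite (u : ℕ → ℂ) : Prop := ∃ P, IsSMOP u P

/-- Three term recurrence relation `x P_n = P_{n+1} + b_n P_n + a_n P_{n-1}`,
with `P_{-1} = 0`, `P_0 = 1`. -/
def HasTTRR (P : ℕ → Polynomial ℂ) (a b : ℕ → ℂ) : Prop :=
  P 0 = 1 ∧ X * P 0 = P 1 + C (b 0) * P 0 ∧
    ∀ n, 1 ≤ n → X * P n = P (n + 1) + C (b n) * P n + C (a n) * P (n - 1)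

/-- Wronskian `W(p,q)(x) = p(x) q'(x) - p'(x) q(x)`. -/
def Wr (p q : Polynomial ℂ) (x : ℂ) : ℂ :=
  p.eval x * (derivative q).eval x - (derivative p).eval x * q.eval x

/-- The monic Jacobi matrix with diagonal `b`, superdiagonal `1` and subdiagonal
entries `J_{n+1,n} = a_{n+1}`. -/
def jacobi (a b : ℕ → ℂ) (i j : ℕ) : ℂ :=
  if i = j then b i else if j = i + 1 then 1 else if i = j + 1 then a i else 0

/-- Entrywise product of semi-infinite (banded) matrices; the sum has finite support. -/
def mprod (A B : ℕ → ℕ → ℂ) (i j : ℕ) : ℂ := ∑' k, A i k * B k j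

/-- `w` is the moment sequence of the inverse functional `u⁻¹`:
the convolution of the moments of `u` and `w` is `(1,0,0,…)`. -/
def IsInverseMoments (u w : ℕ → ℂ) : Prop :=
  ∀ n, ∑ k ∈ Finset.range (n + 1), u k * w (n - k) = if n = 0 then 1 else 0

/-- Apply a functional `u` to the second (outer) variable `y` of a bivariate polynomial
`D = Σ_k q_k(x) y^k`, giving `Σ_k u_k q_k(x)`. -/
def fapplyY (u : ℕ → ℂ) (D : Polynomial (Polynomial ℂ)) : Polynomial ℂ :=
  D.sum fun k q => u k • q

/-- `P^{(1)}_{n-1}`, with the convention `P^{(1)}_{-1} = 0`. -/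
def P1prev (P1 : ℕ → Polynomial ℂ) (n : ℕ) : Polynomial ℂ :=
  if n = 0 then 0 else P1 (n - 1)

open scoped PowerSeries

section MomentFunctional

variable {R : Type*} [CommRing R]

/-- The linear functional on `R[X]` whose `n`-th moment is the coefficient of `X ^ n` in `f`.
Encoding moment sequences as power series makes the product of functionals that of power series. -/
def momentFunctional : R⟦X⟧ →ₗ[R] R[X] →ₗ[R] R :=
  ((basisMonomials R).constr R).toLinearMap ∘ₗ LinearMap.pi PowerSeries.coeff

@[simp]
lemma momentFunctional_X_pow (f : R⟦X⟧) (n : ℕ) :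
    momentFunctional f (X ^ n) = PowerSeries.coeff n f := by
  rw [← monomial_one_right_eq_X_pow]
  exact (basisMonomials R).constr_basis R _ n

@[simp]
lemma momentFunctional_one (f : R⟦X⟧) :
    momentFunctional f 1 = PowerSeries.constantCoeff f := by
  simpa using momentFunctional_X_pow f 0

lemma momentFunctional_injective : Function.Injective (momentFunctional (R := R)) := fun f g h =>
  PowerSeries.ext fun n => by simpa using DFunLike.congr_fun h (X ^ n)

/-- The operator `p ↦ ⟨f_y, (p(x) - p(y)) / (x - y)⟩`, which turns the orthogonal polynomials of `f`
into their associated polynomials of the first kind. It is given on monomials by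
`(x ^ n - y ^ n) / (x - y) = ∑ i < n, x ^ i * y ^ (n - 1 - i)`. -/
def divDiff (f : R⟦X⟧) : R[X] →ₗ[R] R[X] :=
  (basisMonomials R).constr R fun n =>
    ∑ i ∈ Finset.range n, PowerSeries.coeff (n - 1 - i) f • X ^ i

lemma divDiff_X_pow (f : R⟦X⟧) (n : ℕ) :
    divDiff f (X ^ n) = ∑ i ∈ Finset.range n, PowerSeries.coeff (n - 1 - i) f • X ^ i := by
  rw [← monomial_one_right_eq_X_pow]
  exact (basisMonomials R).constr_basis R _ n

@[simp]
lemma divDiff_one (f : R⟦X⟧) : divDiff f 1 = 0 := by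
  simpa using divDiff_X_pow f 0

lemma divDiff_C_mul (f : R⟦X⟧) (r : R) (p : R[X]) : divDiff f (C r * p) = C r * divDiff f p := by
  rw [← smul_eq_C_mul, map_smul, smul_eq_C_mul]

-- `(x p(x) - y p(y)) / (x - y) = x (p(x) - p(y)) / (x - y) + p(y)`
lemma divDiff_X_mul (f : R⟦X⟧) (p : R[X]) :
    divDiff f (X * p) = X * divDiff f p + C (momentFunctional f p) := by
  induction p using Polynomial.induction_on' with
  | add p q hp hq => simp only [mul_add, map_add, hp, hq]; ring
  | monomial n r =>
    have hX_pow : divDiff f (X * X ^ n) = X * divDiff f (X ^ n) + C (PowerSeries.coeff n f) := by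
      rw [← pow_succ', divDiff_X_pow, divDiff_X_pow, Finset.sum_range_succ', Finset.mul_sum]
      congr 1
      · refine Finset.sum_congr rfl fun i _ => ?_
        rw [mul_smul_comm, ← pow_succ', show n + 1 - 1 - (i + 1) = n - 1 - i by lia]
      · simp [smul_eq_C_mul]
    rw [← C_mul_X_pow_eq_monomial, ← smul_eq_C_mul, mul_smul_comm, map_smul, map_smul, map_smul,
      hX_pow, momentFunctional_X_pow, smul_add, mul_smul_comm, smul_C]

lemma momentFunctional_divDiff (f g : R⟦X⟧) (p : R[X]) :
    momentFunctional g (divDiff f p) = momentFunctional (PowerSeries.X * (g * f)) p := by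
  suffices momentFunctional g ∘ₗ divDiff f = momentFunctional (PowerSeries.X * (g * f)) from
    DFunLike.congr_fun this p
  refine (basisMonomials R).ext fun n => ?_
  simp only [coe_basisMonomials, monomial_one_right_eq_X_pow, LinearMap.comp_apply,
    momentFunctional_X_pow, divDiff_X_pow, map_sum, map_smul, smul_eq_mul]
  cases n with
  | zero => simp
  | succ n =>
    rw [PowerSeries.coeff_succ_X_mul, PowerSeries.coeff_mul,
      Finset.Nat.sum_antidiagonal_eq_sum_range_succ_mk]
    exact Finset.sum_congr rfl fun i _ => mul_comm _ _

end MomentFunctional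

section ThreeTermRecurrence

variable {R : Type*} [CommRing R] {P Q S : ℕ → R[X]} {a b : ℕ → R}

/-- The three term recurrence relation `x P_n = P_{n+1} + b_n P_n + a_n P_{n-1}`, with `P_{-1} = 0`
and `P_0 = 1`, over an arbitrary commutative ring; over `ℂ` it unfolds to `HasTTRR`. -/
def HasThreeTermRecurrence (P : ℕ → R[X]) (a b : ℕ → R) : Prop :=
  P 0 = 1 ∧ X * P 0 = P 1 + C (b 0) * P 0 ∧
    ∀ n, 1 ≤ n → X * P n = P (n + 1) + C (b n) * P n + C (a n) * P (n - 1)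

/-- `S` is the co-recursive sequence of parameter `α` with respect to `P`, whose recurrence
coefficients are `a` and `b`. -/
def IsCorecursive (S P : ℕ → R[X]) (a b : ℕ → R) (α : R) : Prop :=
  S 0 = 1 ∧ S 1 = P 1 - C α ∧
    ∀ n, 1 ≤ n → X * S n = S (n + 1) + C (b n) * S n + C (a n) * S (n - 1)

namespace HasThreeTermRecurrence

lemma span_range_eq_top (hP : HasThreeTermRecurrence P a b) :
    Submodule.span R (Set.range P) = ⊤ := by
  have hmem (n : ℕ) : P n ∈ Submodule.span R (Set.range P) := Submodule.subset_span ⟨n, rfl⟩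
  have hC_mul (r : R) (n : ℕ) : C r * P n ∈ Submodule.span R (Set.range P) := by
    simpa only [smul_eq_C_mul] using Submodule.smul_mem _ r (hmem n)
  have hX_mul (p : R[X]) (hp : p ∈ Submodule.span R (Set.range P)) :
      X * p ∈ Submodule.span R (Set.range P) := by
    induction hp using Submodule.span_induction with
    | mem p hp =>
      obtain ⟨n, rfl⟩ := hp
      rcases n.eq_zero_or_pos with rfl | hn
      · exact hP.2.1 ▸ add_mem (hmem 1) (hC_mul _ 0)
      · exact hP.2.2 n hn ▸ add_mem (add_mem (hmem _) (hC_mul _ n)) (hC_mul _ _)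
    | zero => simp
    | add p q _ _ hp hq => exact mul_add X p q ▸ add_mem hp hq
    | smul r p _ hp => exact mul_smul_comm r X p ▸ Submodule.smul_mem _ r hp
  have hX_pow (n : ℕ) : (X : R[X]) ^ n ∈ Submodule.span R (Set.range P) := by
    induction n with
    | zero => exact pow_zero (X : R[X]) ▸ hP.1 ▸ hmem 0
    | succ n ih => exact pow_succ' (X : R[X]) n ▸ hX_mul _ ih
  rw [eq_top_iff, ← (basisMonomials R).span_eq, Submodule.span_le]
  rintro _ ⟨n, rfl⟩
  simpa only [coe_basisMonomials, monomial_one_right_eq_X_pow, SetLike.mem_coe] using hX_pow n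

lemma constantCoeff_smul_comm (hP : HasThreeTermRecurrence P a b) {f g : R⟦X⟧}
    (hf : ∀ n, 1 ≤ n → momentFunctional f (P n) = 0)
    (hg : ∀ n, 1 ≤ n → momentFunctional g (P n) = 0) :
    PowerSeries.constantCoeff f • g = PowerSeries.constantCoeff g • f := by
  refine momentFunctional_injective (LinearMap.ext_on_range hP.span_range_eq_top fun n => ?_)
  rcases n.eq_zero_or_pos with rfl | hn
  · simp [hP.1, mul_comm]
  · simp [hf n hn, hg n hn]

lemma divDiff_succ (hP : HasThreeTermRecurrence P a b)
    (hQ : HasThreeTermRecurrence Q (fun n => a (n + 1)) fun n => b (n + 1))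
    {f : R⟦X⟧} (hf : ∀ n, 1 ≤ n → momentFunctional f (P n) = 0) (n : ℕ) :
    divDiff f (P (n + 1)) = C (PowerSeries.constantCoeff f) * Q n := by
  have h_one : divDiff f (P 1) = C (PowerSeries.constantCoeff f) := by
    have h := congrArg (divDiff f) hP.2.1
    simp only [divDiff_X_mul, map_add, divDiff_C_mul, hP.1, divDiff_one, momentFunctional_one] at h
    linear_combination -h
  have h_rec (n : ℕ) : X * divDiff f (P (n + 1)) = divDiff f (P (n + 2)) +
      C (b (n + 1)) * divDiff f (P (n + 1)) + C (a (n + 1)) * divDiff f (P n) := by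
    have h := congrArg (divDiff f) (hP.2.2 (n + 1) n.succ_pos)
    simpa only [divDiff_X_mul, map_add, divDiff_C_mul, hf (n + 1) n.succ_pos, map_zero, add_zero,
      Nat.add_sub_cancel] using h
  induction n using Nat.twoStepInduction with
  | zero => rw [h_one, hQ.1, mul_one]
  | one =>
    have h := h_rec 0
    rw [hP.1, divDiff_one, h_one] at h
    have hQ_one := hQ.2.1
    rw [hQ.1] at hQ_one
    linear_combination C (PowerSeries.constantCoeff f) * hQ_one - h
  | more n ih ih' =>
    have h := h_rec (n + 1)
    rw [ih, ih'] at h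
    have hQ_rec := hQ.2.2 (n + 1) n.succ_pos
    rw [Nat.add_sub_cancel] at hQ_rec
    linear_combination C (PowerSeries.constantCoeff f) * hQ_rec - h

lemma isCorecursive_add_C_mul (hP : HasThreeTermRecurrence P a b)
    (hQ : HasThreeTermRecurrence Q (fun n => a (n + 1)) fun n => b (n + 1)) {r : R}
    (hS_zero : S 0 = P 0) (hS_succ : ∀ n, S (n + 1) = P (n + 1) + C r * Q n) :
    IsCorecursive S P a b (-r) := by
  refine ⟨hS_zero.trans hP.1, by simp [hS_succ, hQ.1], fun n hn => ?_⟩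
  have hP_rec := hP.2.2 n hn
  match n with
  | 1 =>
    have hQ_rec := hQ.2.1
    simp only [Nat.sub_self, zero_add] at hP_rec hQ_rec ⊢
    rw [hS_succ 0, hS_succ 1, hS_zero]
    linear_combination hP_rec + C r * hQ_rec
  | n + 2 =>
    have hQ_rec := hQ.2.2 (n + 1) n.succ_pos
    simp only [Nat.add_sub_cancel, Nat.add_succ_sub_one, hS_succ] at hP_rec hQ_rec ⊢
    linear_combination hP_rec + C r * hQ_rec

lemma C_mul_mul_add_eq_C (hP : HasThreeTermRecurrence P a b)
    (hQ : HasThreeTermRecurrence Q (fun n => a (n + 1)) fun n => b (n + 1))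
    {f g h : R⟦X⟧} {t : R} (hf : ∀ n, 1 ≤ n → momentFunctional f (P n) = 0)
    (hg : ∀ n, momentFunctional g (P (n + 1) + C (PowerSeries.constantCoeff f * t) * Q n) = 0)
    (hfh : f * h = 1) :
    PowerSeries.C (PowerSeries.constantCoeff f) * (g * (h + PowerSeries.C t * PowerSeries.X)) =
      PowerSeries.C (PowerSeries.constantCoeff g) := by
  have h_annihilates (n : ℕ) (hn : 1 ≤ n) :
      momentFunctional (g + t • (PowerSeries.X * (g * f))) (P n) = 0 := by
    obtain ⟨m, rfl⟩ := Nat.exists_eq_add_of_le' hn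
    calc momentFunctional (g + t • (PowerSeries.X * (g * f))) (P (m + 1))
        = momentFunctional g (P (m + 1) + t • divDiff f (P (m + 1))) := by
          simp [momentFunctional_divDiff]
      _ = momentFunctional g (P (m + 1) + C (PowerSeries.constantCoeff f * t) * Q m) := by
          rw [hP.divDiff_succ hQ hf, smul_eq_C_mul, C_mul, mul_left_comm, mul_assoc]
      _ = 0 := hg m
  have h_proportional := hP.constantCoeff_smul_comm hf h_annihilates
  simp only [PowerSeries.smul_eq_C_mul, map_add, map_mul, PowerSeries.constantCoeff_X,
    PowerSeries.constantCoeff_C, zero_mul, mul_zero, add_zero] at h_proportional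
  linear_combination h * h_proportional + (PowerSeries.C (PowerSeries.constantCoeff g) -
    PowerSeries.C (PowerSeries.constantCoeff f) * PowerSeries.C t * PowerSeries.X * g) * hfh

end HasThreeTermRecurrence

end ThreeTermRecurrence

lemma coeff_mk_mul_mk {R : Type*} [Semiring R] (u w : ℕ → R) (n : ℕ) :
    PowerSeries.coeff n (PowerSeries.mk u * PowerSeries.mk w) =
      ∑ k ∈ Finset.range (n + 1), u k * w (n - k) := by
  simp [PowerSeries.coeff_mul, Finset.Nat.sum_antidiagonal_eq_sum_range_succ_mk]

theorem stmt_17_general {R : Type*} [CommRing R] {P Q S : ℕ → R[X]} {a b : ℕ → R}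
    (hP : HasThreeTermRecurrence P a b)
    (hQ : HasThreeTermRecurrence Q (fun n => a (n + 1)) fun n => b (n + 1))
    {v u vinv w : ℕ → R} {t : R}
    (hv : ∀ n, 1 ≤ n → momentFunctional (PowerSeries.mk v) (P n) = 0)
    (hS_zero : S 0 = P 0) (hS_succ : ∀ n, S (n + 1) = P (n + 1) + C (v 0 * t) * Q n)
    (hu : ∀ n, 1 ≤ n → momentFunctional (PowerSeries.mk u) (S n) = 0)
    (hvinv : ∀ n, ∑ k ∈ Finset.range (n + 1), v k * vinv (n - k) = if n = 0 then 1 else 0)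
    (hw : ∀ n, w n = vinv n + t * (if n = 1 then 1 else 0)) :
    IsCorecursive S P a b (-(v 0 * t)) ∧
      ∀ n, v 0 * ∑ k ∈ Finset.range (n + 1), u k * w (n - k) = u 0 * (if n = 0 then 1 else 0) := by
  refine ⟨hP.isCorecursive_add_C_mul hQ hS_zero hS_succ, fun n => ?_⟩
  have h_inverse : PowerSeries.mk v * PowerSeries.mk vinv = 1 := by
    ext n
    rw [coeff_mk_mul_mk, hvinv, PowerSeries.coeff_one]
  have h_mk_w : PowerSeries.mk w = PowerSeries.mk vinv + PowerSeries.C t * PowerSeries.X := by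
    ext n
    simp only [PowerSeries.coeff_mk, hw, map_add, PowerSeries.coeff_C_mul, PowerSeries.coeff_X]
  have h_series := hP.C_mul_mul_add_eq_C hQ (g := PowerSeries.mk u) (t := t) hv
    (fun n => by simpa [hS_succ] using hu (n + 1) n.succ_pos) h_inverse
  rw [← h_mk_w] at h_series
  simpa [coeff_mk_mul_mk, PowerSeries.coeff_C] using congrArg (PowerSeries.coeff n) h_series

lemma fapply_eq_momentFunctional (u : ℕ → ℂ) (p : ℂ[X]) :
    fapply u p = momentFunctional (PowerSeries.mk u) p := by
  conv_rhs => rw [p.as_sum_support_C_mul_X_pow]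
  simp [fapply, Polynomial.sum, ← smul_eq_C_mul]

lemma IsSMOP.momentFunctional_eq_zero {u : ℕ → ℂ} {P : ℕ → ℂ[X]} (hP : IsSMOP u P) (n : ℕ)
    (hn : 1 ≤ n) : momentFunctional (PowerSeries.mk u) (P n) = 0 := by
  obtain ⟨h_monic, h_natDegree, h_orthogonal, -⟩ := hP
  have h := h_orthogonal n 0 (by lia)
  rwa [(h_monic 0).natDegree_eq_zero.mp (h_natDegree 0), mul_one,
    fapply_eq_momentFunctional] at h

/-- the polynomials `S_n = P_n + (v_0/v̂_0) P^{(1)}_{n-1}` are the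
co-recursive sequence of parameter `α = -v_0/v̂_0` with respect to `v`, and the functional
`v^α` with SMOP `(S_n)` satisfies `v^α = (v^α_0/v_0)(v⁻¹ - (1/v̂_0)δ'_0)⁻¹`, i.e. the
moments of `v^α` convolved with `w_n = (v⁻¹)_n + (1/v̂_0)δ_{n,1}` give `(v^α_0/v_0)δ_{n,0}`. -/
theorem stmt_17 (v : ℕ → ℂ) (c : ℂ) (P : ℕ → Polynomial ℂ) (hP : IsSMOP v P)
    (a b : ℕ → ℂ) (hrec : HasTTRR P a b) (ha : ∀ n, 1 ≤ n → a n ≠ 0) (hv0 : v 0 ≠ 0)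
    (P1 : ℕ → Polynomial ℂ)
    (hP1 : HasTTRR P1 (fun n => a (n + 1)) (fun n => b (n + 1)))
    (vh : ℕ → ℂ) (hger : ∀ n, vh (n + 1) - c * vh n = v n) (hvh0 : vh 0 ≠ 0)
    (S : ℕ → Polynomial ℂ)
    (hS : ∀ n, S n = P n + C (v 0 / vh 0) * P1prev P1 n)
    (vα : ℕ → ℂ) (hvα : IsSMOP vα S)
    (vinv : ℕ → ℂ) (hinv : IsInverseMoments v vinv)
    (w : ℕ → ℂ)
    (hw : ∀ n, w n = vinv n + (1 / vh 0) * (if n = 1 then 1 else 0)) :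
    S 0 = 1 ∧ S 1 = P 1 - C (-(v 0) / vh 0)
    ∧ (∀ n, 1 ≤ n → X * S n = S (n + 1) + C (b n) * S n + C (a n) * S (n - 1))
    ∧ (∀ n, ∑ k ∈ Finset.range (n + 1), vα k * w (n - k)
          = vα 0 / v 0 * (if n = 0 then 1 else 0)) := by
  obtain ⟨⟨hS_zero, hS_one, hS_rec⟩, h_conv⟩ := stmt_17_general (S := S) (t := 1 / vh 0) hrec hP1
    hP.momentFunctional_eq_zero (by simp [hS, P1prev])
    (fun n => by simp [hS, P1prev, div_eq_mul_inv]) hvα.momentFunctional_eq_zero hinv hw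
  refine ⟨hS_zero, by rw [hS_one, mul_one_div, neg_div], hS_rec, fun n => ?_⟩
  rw [div_mul_eq_mul_div, eq_div_iff hv0, mul_comm, h_conv n]
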